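/- Let X be a nonempty compact metric space, Λ a compact metric space, and w : Λ × X → X a weakly hyperbolic IFS with global attractor K. Then for every σ ∈ Ω and every n ≥ 1 the map w_{σ₁…σₙ} = w_{σ₁} ∘ ⋯ ∘ w_{σₙ} : X → X has a unique fixed point, and K equals the closure of the set of all these fixed points (taken over all σ ∈ Ω and n ≥ 1). -/

import Mathlib

open Metric Set Filter Topology

/-- `seqComp w σ n = w_{σ₁} ∘ ⋯ ∘ w_{σₙ}` (with `σ i` denoting `σ_{i+1}`). -/
def seqComp {Λ X : Type*} (w : Λ → X → X) (σ : ℕ → Λ) : ℕ → X → X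
  | 0 => id
  | n + 1 => seqComp w σ n ∘ w (σ n)

/-- The Hutchinson–Barnsley operator on sets: `F(A) = w(Λ × A)`. -/
def HBset {Λ X : Type*} (w : Λ → X → X) (A : Set X) : Set X :=
  (fun p : Λ × X => w p.1 p.2) '' (Set.univ ×ˢ A)

/-!
Suppose `g = w_{τ₁…τₙ}` satisfies `diam (gᵏ(X)) → 0`. Then `g` has a unique fixed point `c`, the
limit of all its orbits, and for every word map `u` the fixed points `pₖ` of the longer word maps
`u ∘ gᵏ` converge to `u c`: indeed `pₖ = u (gᵏ pₖ)` and `gᵏ pₖ → c`. The attractor `K` is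
approximated by the sets `Fᵐ({c})` of all such `u c`, so it lies in the closure of the fixed points.
Conversely a fixed point `x` of a word map of length `n` belongs to `Fⁿᵏ({x})` for every `k`, hence
to the limit `K` of these sets.
-/

section BoundedSpace

variable {ι X : Type*} [PseudoMetricSpace X] [BoundedSpace X]

theorem mem_of_frequently_mem_of_tendsto_hausdorffDist {l : Filter ι} {A : ι → Set X}
    {K : Set X} (hK : IsClosed K) (hKne : K.Nonempty)
    (hA : Tendsto (fun i => hausdorffDist (A i) K) l (𝓝 0)) {x : X} (hx : ∃ᶠ i in l, x ∈ A i) :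
    x ∈ K := by
  refine (hK.mem_iff_infDist_zero hKne).2 (le_antisymm ?_ infDist_nonneg)
  refine ge_of_tendsto_of_frequently hA (hx.mono fun i hi => ?_)
  exact infDist_le_hausdorffDist_of_mem hi
    (hausdorffEDist_ne_top_of_nonempty_of_bounded ⟨x, hi⟩ hKne (.all _) (.all _))

theorem subset_closure_iUnion_of_tendsto_hausdorffDist {l : Filter ι} [l.NeBot]
    {A : ι → Set X} {K : Set X} (hAne : ∀ i, (A i).Nonempty)
    (hA : Tendsto (fun i => hausdorffDist (A i) K) l (𝓝 0)) :
    K ⊆ closure (⋃ i, A i) := by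
  refine fun x hx => Metric.mem_closure_iff.2 fun ε hε => ?_
  obtain ⟨i, hi⟩ := (hA.eventually_lt_const hε).exists
  obtain ⟨y, hy, hyx⟩ := exists_dist_lt_of_hausdorffDist_lt' hx hi
    (hausdorffEDist_ne_top_of_nonempty_of_bounded (hAne i) ⟨x, hx⟩ (.all _) (.all _))
  exact ⟨y, mem_iUnion_of_mem i hy, by rwa [dist_comm]⟩

theorem tendsto_iterate_apply_of_isFixedPt {f : X → X}
    (hd : Tendsto (fun k => diam (range f^[k])) atTop (𝓝 0)) {c : X}
    (hc : Function.IsFixedPt f c) (q : ℕ → X) : Tendsto (fun k => f^[k] (q k)) atTop (𝓝 c) :=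
  tendsto_iff_dist_tendsto_zero.2 <| squeeze_zero (fun _ => dist_nonneg)
    (fun k => dist_le_diam_of_mem (.all _) (mem_range_self (q k)) ⟨c, hc.iterate k⟩) hd

theorem cauchySeq_iterate_of_tendsto_diam_range {f : X → X}
    (hd : Tendsto (fun k => diam (range f^[k])) atTop (𝓝 0)) (x : X) :
    CauchySeq fun k => f^[k] x := by
  have iterate_mem_range {N k : ℕ} (h : N ≤ k) : f^[k] x ∈ range f^[N] :=
    ⟨f^[k - N] x, by rw [← Function.iterate_add_apply, Nat.add_sub_cancel' h]⟩
  exact cauchySeq_of_le_tendsto_0 _ (fun _ _ _ hm hn =>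
    dist_le_diam_of_mem (.all _) (iterate_mem_range hm) (iterate_mem_range hn)) hd

end BoundedSpace

theorem existsUnique_isFixedPt_of_tendsto_diam_range_iterate {X : Type*} [MetricSpace X]
    [CompleteSpace X] [BoundedSpace X] [Nonempty X] {f : X → X} (hf : Continuous f)
    (hd : Tendsto (fun k => diam (range f^[k])) atTop (𝓝 0)) :
    ∃! x, Function.IsFixedPt f x := by
  obtain ⟨x₀⟩ := ‹Nonempty X›
  obtain ⟨c, hc⟩ := cauchySeq_tendsto_of_complete (cauchySeq_iterate_of_tendsto_diam_range hd x₀)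
  have hfc : Function.IsFixedPt f c := isFixedPt_of_tendsto_iterate hc hf.continuousAt
  refine ⟨c, hfc, fun y hy => ?_⟩
  have hyc : Tendsto (fun k => f^[k] y) atTop (𝓝 c) :=
    tendsto_iterate_apply_of_isFixedPt hd hfc fun _ => y
  simp only [fun k => (hy.iterate k).eq] at hyc
  exact tendsto_nhds_unique tendsto_const_nhds hyc

section WordMaps

variable {Λ X : Type*} (w : Λ → X → X)

theorem seqComp_congr {σ τ : ℕ → Λ} {n : ℕ} (h : ∀ i < n, σ i = τ i) :
    seqComp w σ n = seqComp w τ n := by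
  induction n with
  | zero => rfl
  | succ n ih =>
    simp only [seqComp, ih fun i hi => h i (hi.trans n.lt_succ_self), h n n.lt_succ_self]

theorem seqComp_add (σ : ℕ → Λ) (m n : ℕ) :
    seqComp w σ (m + n) = seqComp w σ m ∘ seqComp w (fun i => σ (m + i)) n := by
  induction n with
  | zero => rfl
  | succ n ih =>
    change seqComp w σ (m + n) ∘ w (σ (m + n)) = _
    rw [ih]
    rfl

theorem exists_seqComp_eq_comp (σ τ : ℕ → Λ) (m n : ℕ) :
    ∃ ρ : ℕ → Λ, seqComp w ρ (m + n) = seqComp w σ m ∘ seqComp w τ n := by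
  refine ⟨fun i => if i < m then σ i else τ (i - m), ?_⟩
  rw [seqComp_add]
  congr 1
  · exact seqComp_congr w fun i hi => if_pos hi
  · exact seqComp_congr w fun i _ => by simp

theorem seqComp_mod_mul (σ : ℕ → Λ) (n k : ℕ) :
    seqComp w (fun i => σ (i % n)) (n * k) = (seqComp w σ n)^[k] := by
  induction k with
  | zero => rfl
  | succ k ih =>
    rw [Nat.mul_succ, seqComp_add, ih, Function.iterate_succ]
    congr 1
    exact seqComp_congr w fun i hi => by simp [Nat.mod_eq_of_lt hi]

theorem mem_iterate_HBset [Nonempty Λ] {n : ℕ} {B : Set X} {y : X} :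
    y ∈ (HBset w)^[n] B ↔ ∃ σ : ℕ → Λ, ∃ b ∈ B, seqComp w σ n b = y := by
  induction n generalizing B with
  | zero => simp [seqComp]
  | succ n ih =>
    rw [Function.iterate_succ_apply, ih]
    constructor
    · rintro ⟨σ, _, ⟨⟨a, b⟩, ⟨-, hb⟩, rfl⟩, rfl⟩
      have hσ : seqComp w (Function.update σ n a) n = seqComp w σ n :=
        seqComp_congr w fun i hi => Function.update_of_ne hi.ne _ _
      exact ⟨Function.update σ n a, b, hb, by simp [seqComp, hσ]⟩
    · rintro ⟨σ, b, hb, rfl⟩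
      exact ⟨σ, w (σ n) b, ⟨(σ n, b), ⟨mem_univ _, hb⟩, rfl⟩, rfl⟩

/-- The points fixed by some `w_{σ₁…σₙ}` with `n ≥ 1`, i.e. the set whose closure is compared with
the attractor. The empty word is excluded, since its map is the identity. -/
def wordFixedPoints : Set X :=
  {x | ∃ (σ : ℕ → Λ) (n : ℕ), 1 ≤ n ∧ seqComp w σ n x = x}

variable {w}

theorem frequently_mem_iterate_HBset_singleton [Nonempty Λ] {x : X}
    (hx : x ∈ wordFixedPoints w) : ∃ᶠ N in atTop, x ∈ (HBset w)^[N] {x} := by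
  obtain ⟨σ, n, hn, hfix⟩ := hx
  refine frequently_atTop.2 fun k => ⟨n * k, Nat.le_mul_of_pos_left k hn, ?_⟩
  refine (mem_iterate_HBset w).2 ⟨fun i => σ (i % n), x, rfl, ?_⟩
  rw [seqComp_mod_mul]
  exact Function.iterate_fixed hfix k

theorem continuous_seqComp [TopologicalSpace X] (hw : ∀ a, Continuous (w a)) (σ : ℕ → Λ) (n : ℕ) :
    Continuous (seqComp w σ n) := by
  induction n with
  | zero => exact continuous_id
  | succ n ih => exact ih.comp (hw (σ n))

theorem tendsto_diam_range_iterate_seqComp [PseudoMetricSpace X] {σ : ℕ → Λ} {n : ℕ} (hn : 1 ≤ n)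
    (hσ : Tendsto (fun N => diam (range (seqComp w (fun i => σ (i % n)) N))) atTop (𝓝 0)) :
    Tendsto (fun k => diam (range (seqComp w σ n)^[k])) atTop (𝓝 0) := by
  simpa only [Function.comp_def, id, seqComp_mod_mul] using
    hσ.comp (tendsto_id.const_mul_atTop' hn)

variable [MetricSpace X] [CompleteSpace X] [BoundedSpace X]

theorem existsUnique_seqComp_eq_self [Nonempty X] (hw : ∀ a, Continuous (w a))
    (hd : ∀ (σ : ℕ → Λ) (n : ℕ), 1 ≤ n →
      Tendsto (fun k => diam (range (seqComp w σ n)^[k])) atTop (𝓝 0))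
    (σ : ℕ → Λ) {n : ℕ} (hn : 1 ≤ n) : ∃! x, seqComp w σ n x = x :=
  existsUnique_isFixedPt_of_tendsto_diam_range_iterate (continuous_seqComp hw σ n) (hd σ n hn)

theorem seqComp_mem_closure_wordFixedPoints (hw : ∀ a, Continuous (w a))
    (hd : ∀ (σ : ℕ → Λ) (n : ℕ), 1 ≤ n →
      Tendsto (fun k => diam (range (seqComp w σ n)^[k])) atTop (𝓝 0))
    {c : X} (hc : c ∈ wordFixedPoints w) (σ : ℕ → Λ) (m : ℕ) :
    seqComp w σ m c ∈ closure (wordFixedPoints w) := by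
  have : Nonempty X := ⟨c⟩
  obtain ⟨τ, n, hn, hτc⟩ := hc
  -- The exponent `k + 1` keeps the word `σ₁…σₘ(τ₁…τₙ)ᵏ⁺¹` nonempty even if `m = k = 0`.
  have exists_fixed (k : ℕ) : ∃ p ∈ wordFixedPoints w,
      seqComp w σ m ((seqComp w τ n)^[k + 1] p) = p := by
    obtain ⟨ρ, hρ⟩ := exists_seqComp_eq_comp w σ (fun i => τ (i % n)) m (n * (k + 1))
    rw [seqComp_mod_mul] at hρ
    have hlen : 1 ≤ m + n * (k + 1) := le_add_left (Nat.mul_pos hn k.succ_pos)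
    obtain ⟨p, hp, -⟩ := existsUnique_seqComp_eq_self hw hd ρ hlen
    exact ⟨p, ⟨ρ, _, hlen, hp⟩, by rwa [hρ] at hp⟩
  choose p hp_mem hp using exists_fixed
  have hτp : Tendsto (fun k => (seqComp w τ n)^[k + 1] (p k)) atTop (𝓝 c) :=
    tendsto_iterate_apply_of_isFixedPt (hd τ n hn) hτc fun k => seqComp w τ n (p k)
  have hp_tendsto : Tendsto p atTop (𝓝 (seqComp w σ m c)) :=
    (((continuous_seqComp hw σ m).tendsto c).comp hτp).congr hp
  exact mem_closure_of_tendsto hp_tendsto (.of_forall hp_mem)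

end WordMaps

theorem stmt_5_general {Λ X : Type*} [Nonempty Λ] [MetricSpace X] [CompleteSpace X]
    [BoundedSpace X] {w : Λ → X → X} (hw : ∀ a, Continuous (w a))
    (hd : ∀ (σ : ℕ → Λ) (n : ℕ), 1 ≤ n →
      Tendsto (fun k => diam (range (seqComp w σ n)^[k])) atTop (𝓝 0))
    {K : Set X} (hKne : K.Nonempty) (hK : IsClosed K)
    (hKattr : ∀ b : X, Tendsto (fun n => hausdorffDist ((HBset w)^[n] {b}) K) atTop (𝓝 0)) :
    (∀ (σ : ℕ → Λ) (n : ℕ), 1 ≤ n → ∃! x, seqComp w σ n x = x) ∧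
      K = closure (wordFixedPoints w) := by
  have : Nonempty X := ⟨hKne.some⟩
  have hfix (σ : ℕ → Λ) (n : ℕ) (hn : 1 ≤ n) := existsUnique_seqComp_eq_self hw hd σ hn
  refine ⟨hfix, Subset.antisymm ?_ (closure_minimal (fun x hx => ?_) hK)⟩
  · obtain ⟨σ⟩ : Nonempty (ℕ → Λ) := inferInstance
    obtain ⟨c, hc, -⟩ := hfix σ 1 le_rfl
    have hne (n : ℕ) : ((HBset w)^[n] {c}).Nonempty := ⟨_, (mem_iterate_HBset w).2 ⟨σ, c, rfl, rfl⟩⟩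
    refine (subset_closure_iUnion_of_tendsto_hausdorffDist hne (hKattr c)).trans
      (closure_minimal (iUnion_subset fun n y hy => ?_) isClosed_closure)
    obtain ⟨τ, _, rfl, rfl⟩ := (mem_iterate_HBset w).1 hy
    exact seqComp_mem_closure_wordFixedPoints hw hd ⟨σ, 1, le_rfl, hc⟩ τ n
  · exact mem_of_frequently_mem_of_tendsto_hausdorffDist hK hKne (hKattr x)
      (frequently_mem_iterate_HBset_singleton hx)

/-- For a weakly hyperbolic IFS on a nonempty compact metric space with global
attractor `K`, each finite composition `w_{σ₁…σₙ}` (`n ≥ 1`) has a unique fixed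
point, and `K` is the closure of the set of all such fixed points. -/
theorem stmt_5 {Λ X : Type*} [MetricSpace Λ] [CompactSpace Λ] [Nonempty Λ]
    [MetricSpace X] [CompactSpace X] [Nonempty X]
    (w : Λ → X → X) (hw : Continuous fun p : Λ × X => w p.1 p.2)
    (hyp : ∀ σ : ℕ → Λ,
      Tendsto (fun n => diam (Set.range (seqComp w σ n))) atTop (𝓝 0))
    (K : Set X) (hKne : K.Nonempty) (hKc : IsCompact K)
    (hKattr : ∀ B : Set X, B.Nonempty → IsCompact B →
      Tendsto (fun n => hausdorffDist ((HBset w)^[n] B) K) atTop (𝓝 0)) :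
    (∀ σ : ℕ → Λ, ∀ n : ℕ, 1 ≤ n → ∃! x : X, seqComp w σ n x = x) ∧
      K = closure {x : X | ∃ (σ : ℕ → Λ) (n : ℕ), 1 ≤ n ∧ seqComp w σ n x = x} := by
  exact stmt_5_general (fun a => hw.comp (.prodMk_right a))
    (fun σ n hn => tendsto_diam_range_iterate_seqComp hn (hyp fun i => σ (i % n)))
    hKne hKc.isClosed fun b => hKattr {b} (singleton_nonempty b) isCompact_singleton
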